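/- Let I be a right L(V)-submodule of L(V,W). Then the set of finite-rank elements of I equals { T ∈ L(V,W) : T has finite rank and range T ⊆ im(I) }, where im(I) is the span of the union of ranges of elements of I. -/

import Mathlib

variable {D V W : Type*} [DivisionRing D]
  [AddCommGroup V] [Module D V] [AddCommGroup W] [Module D W]

/-- `I` is a right `L(V)`-submodule of `L(V,W)`: closed under addition and
under right composition with arbitrary endomorphisms of `V`. -/
def IsRightSubmodule (I : Set (V →ₗ[D] W)) : Prop :=
  (0 : V →ₗ[D] W) ∈ I ∧ (∀ S T : V →ₗ[D] W, S ∈ I → T ∈ I → S + T ∈ I) ∧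
    (∀ S ∈ I, ∀ A : V →ₗ[D] V, S.comp A ∈ I)

/-- `I` is a left `L(W)`-submodule of `L(V,W)`: closed under addition and
under left composition with arbitrary endomorphisms of `W`. -/
def IsLeftSubmodule (I : Set (V →ₗ[D] W)) : Prop :=
  (0 : V →ₗ[D] W) ∈ I ∧ (∀ S T : V →ₗ[D] W, S ∈ I → T ∈ I → S + T ∈ I) ∧
    (∀ S ∈ I, ∀ A : W →ₗ[D] W, A.comp S ∈ I)

/-- The image of a family of linear maps: the span of the union of their ranges. -/
def imageOf (I : Set (V →ₗ[D] W)) : Submodule D W :=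
  ⨆ T ∈ I, LinearMap.range T

/-- `I` is finitely generated as a right `L(V)`-module. -/
def RightFG (I : Set (V →ₗ[D] W)) : Prop :=
  ∃ (n : ℕ) (T : Fin n → (V →ₗ[D] W)), (∀ i, T i ∈ I) ∧
    ∀ S ∈ I, ∃ P : Fin n → (V →ₗ[D] V), S = ∑ i, (T i).comp (P i)

/-- `I` is finitely generated as a left `L(W)`-module. -/
def LeftFG (I : Set (V →ₗ[D] W)) : Prop :=
  ∃ (n : ℕ) (T : Fin n → (V →ₗ[D] W)), (∀ i, T i ∈ I) ∧
    ∀ S ∈ I, ∃ P : Fin n → (W →ₗ[D] W), S = ∑ i, (P i).comp (T i)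

/-! A rank-one map `x ↦ f x • w` with `w = S v` factors as `S ∘ (x ↦ f x • v)`, so it lies in every
right submodule containing `S`; it depends additively on `w`, so the same holds for every `w` in the
span of the ranges. A finite dual basis of the range of `T` writes `T` as a sum of such maps. -/

section RightSubmodule

variable {R M N P : Type*} [Semiring R] [AddCommMonoid M] [Module R M] [AddCommMonoid N]
  [Module R N] [AddCommMonoid P] [Module R P]

variable (R P) in
theorem exists_sum_smulRight_eq_id [Module.Finite R P] [Module.Projective R P] :
    ∃ (n : ℕ) (f : Fin n → P →ₗ[R] R) (p : Fin n → P), ∑ i, (f i).smulRight (p i) = .id := by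
  obtain ⟨n, π, s, -, -, hπs⟩ := Module.Finite.exists_comp_eq_id_of_projective R P
  refine ⟨n, fun i ↦ .proj i ∘ₗ s, fun i ↦ π (Pi.single i 1), LinearMap.ext fun x ↦ ?_⟩
  calc (∑ i, (LinearMap.proj i ∘ₗ s).smulRight (π (Pi.single i 1))) x
      = ∑ i, s x i • π (Pi.single i 1) := by
        simp only [LinearMap.sum_apply, LinearMap.smulRight_apply, LinearMap.comp_apply,
          LinearMap.proj_apply]
    _ = π (s x) := by simp only [← map_smul, ← map_sum, ← pi_eq_sum_univ']
    _ = x := LinearMap.congr_fun hπs x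

variable (I : Submodule (Module.End R M)ᵈᵐᵃ (M →ₗ[R] N))

theorem comp_end_mem {S : M →ₗ[R] N} (hS : S ∈ I) (A : Module.End R M) : S ∘ₗ A ∈ I :=
  I.smul_mem (DomMulAct.mk A) hS

theorem smulRight_mem_of_mem_iSup_range (f : M →ₗ[R] R) {w : N}
    (hw : w ∈ ⨆ S ∈ I, LinearMap.range S) : f.smulRight w ∈ I := by
  rw [iSup_subtype'] at hw
  induction hw using Submodule.iSup_induction' with
  | mem S w hw =>
    obtain ⟨v, rfl⟩ := hw
    have factor : f.smulRight (S.1 v) = S.1 ∘ₗ f.smulRight v :=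
      LinearMap.ext fun x ↦ (map_smul S.1 (f x) v).symm
    exact factor ▸ comp_end_mem I S.2 _
  | zero =>
    rw [LinearMap.smulRight_zero]
    exact I.zero_mem
  | add w₁ w₂ _ _ h₁ h₂ =>
    have additive : f.smulRight (w₁ + w₂) = f.smulRight w₁ + f.smulRight w₂ :=
      LinearMap.ext fun x ↦ smul_add (f x) w₁ w₂
    exact additive ▸ I.add_mem h₁ h₂

theorem comp_mem_of_range_le_iSup_range [Module.Finite R P] [Module.Projective R P]
    (g : P →ₗ[R] N) (h : M →ₗ[R] P) (hg : LinearMap.range g ≤ ⨆ S ∈ I, LinearMap.range S) :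
    g ∘ₗ h ∈ I := by
  obtain ⟨n, f, p, hfp⟩ := exists_sum_smulRight_eq_id R P
  have decomposition : g ∘ₗ h = ∑ i, (f i ∘ₗ h).smulRight (g (p i)) := by
    ext x
    calc g (h x) = g ((∑ i, (f i).smulRight (p i)) (h x)) := by rw [hfp, LinearMap.id_apply]
      _ = (∑ i, (f i ∘ₗ h).smulRight (g (p i))) x := by
        simp only [LinearMap.sum_apply, LinearMap.smulRight_apply, LinearMap.comp_apply, map_sum,
          map_smul]
  rw [decomposition]
  exact I.sum_mem fun i _ ↦ smulRight_mem_of_mem_iSup_range I _ (hg ⟨p i, rfl⟩)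

theorem stmt_14_general (T : M →ₗ[R] N) [Module.Finite R (LinearMap.range T)]
    [Module.Projective R (LinearMap.range T)] :
    T ∈ I ↔ LinearMap.range T ≤ ⨆ S ∈ I, LinearMap.range S := by
  refine ⟨fun hT ↦ le_iSup₂_of_le T hT le_rfl, fun hT ↦ ?_⟩
  have hmem : (LinearMap.range T).subtype ∘ₗ T.rangeRestrict ∈ I :=
    comp_mem_of_range_le_iSup_range I _ _ (by rwa [Submodule.range_subtype])
  rwa [LinearMap.subtype_comp_codRestrict] at hmem

end RightSubmodule

/-- A right `L(V)`-submodule of `L(V,W)` as a bundled submodule. The right action by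
precomposition is encoded as a left action of the domain-action type synonym `(End V)ᵈᵐᵃ`. -/
def IsRightSubmodule.toSubmodule {I : Set (V →ₗ[D] W)} (hI : IsRightSubmodule I) :
    Submodule (Module.End D V)ᵈᵐᵃ (V →ₗ[D] W) where
  carrier := I
  zero_mem' := hI.1
  add_mem' {S T} hS hT := hI.2.1 S T hS hT
  smul_mem' A S hS := hI.2.2 S hS (DomMulAct.mk.symm A)

theorem stmt_14 (I : Set (V →ₗ[D] W)) (hI : IsRightSubmodule I) :
    {T : V →ₗ[D] W | T ∈ I ∧ FiniteDimensional D (LinearMap.range T)} =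
      {T : V →ₗ[D] W | FiniteDimensional D (LinearMap.range T) ∧
        LinearMap.range T ≤ imageOf I} :=
  Set.ext fun T ↦ and_comm.trans <| and_congr_right fun _ ↦ stmt_14_general hI.toSubmodule T
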